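/- Let S ∈ ℂ^{pq×pq} be Hermitian positive semidefinite, let B ∈ ℂ^{q×q} be Hermitian positive semidefinite with B ≠ 0, and let 1 ≤ r_a ≤ p. Define R_A ∈ ℂ^{p×p} entrywise by (R_A)_{ij} := tr(B^H S(i,j)) / ‖B‖_F² (which is Hermitian positive semidefinite) and Â := EIG_{r_a}(R_A). Then for every A ∈ ℂ^{p×p} with rank(A) ≤ r_a: ‖S − Â⊗B‖_F ≤ ‖S − A⊗B‖_F. -/

import Mathlib

open Matrix Kronecker BigOperators ComplexOrder

/-- Squared Frobenius norm of a complex matrix. -/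
noncomputable def frobSq {m n : Type*} [Fintype m] [Fintype n] (M : Matrix m n ℂ) : ℝ :=
  ∑ i, ∑ j, Complex.normSq (M i j)

/-- The (i,j)-th q×q block of a pq×pq matrix. -/
def blk {p q : ℕ} (S : Matrix (Fin p × Fin q) (Fin p × Fin q) ℂ) (i j : Fin p) :
    Matrix (Fin q) (Fin q) ℂ := Matrix.of fun k l => S (i, k) (j, l)

/-!
The matrix `R = R_A` is chosen so that `S - R ⊗ B` is orthogonal to every `C ⊗ B` for the trace
inner product, so by Pythagoras `‖S - A ⊗ B‖² = ‖R - A‖² ‖B‖² + ‖S - R ⊗ B‖²` and only `‖R - A‖`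
matters.

It remains to prove the Eckart–Young inequality for `R = ∑ cᵢ uᵢ vᵢᴴ`. Let `K` be the column space
of `A` and `tᵢ` the squared norm of the projection of `uᵢ` to `K`. Testing `R - A` on the
orthonormal vectors `vᵢ` gives `‖R - A‖² ≥ ∑ ‖cᵢ uᵢ - A vᵢ‖² ≥ ∑ |cᵢ|² (1 - tᵢ)`. Since
`0 ≤ tᵢ ≤ 1` and `∑ tᵢ ≤ dim K = rank A`, the last sum is least when `t` is the indicator of the
largest coefficients, where it is the squared error of the truncation.
-/

section Bathtub

variable {ι : Type*}

lemma exists_threshold_of_dominates [Finite ι] {w : ι → ℝ} (hw : ∀ i, 0 ≤ w i) {s : Set ι}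
    (hs : ∀ i ∈ s, ∀ j ∉ s, w j ≤ w i) :
    ∃ a, 0 ≤ a ∧ (∀ i ∈ s, a ≤ w i) ∧ ∀ j ∉ s, w j ≤ a := by
  rcases sᶜ.eq_empty_or_nonempty with hempty | hne
  · exact ⟨0, le_rfl, fun i _ => hw i, fun j hj => (hempty.subset hj).elim⟩
  · obtain ⟨k, hk, hmax⟩ := sᶜ.exists_max_image w sᶜ.toFinite hne
    exact ⟨w k, hw k, fun i hi => hs i hi k hk, hmax⟩

lemma sum_compl_le_sum_mul_one_sub [Fintype ι] [DecidableEq ι] {w t : ι → ℝ}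
    (hw : ∀ i, 0 ≤ w i) {s : Finset ι} (hs : ∀ i ∈ s, ∀ j ∉ s, w j ≤ w i)
    (ht0 : ∀ i, 0 ≤ t i) (ht1 : ∀ i, t i ≤ 1) (hsum : ∑ i, t i ≤ s.card) :
    ∑ i ∈ sᶜ, w i ≤ ∑ i, w i * (1 - t i) := by
  obtain ⟨a, ha, has, hsa⟩ := exists_threshold_of_dominates (s := (s : Set ι)) hw hs
  have on_s : a * ∑ i ∈ s, (1 - t i) ≤ ∑ i ∈ s, w i * (1 - t i) := by
    rw [Finset.mul_sum]
    exact Finset.sum_le_sum fun i hi =>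
      mul_le_mul_of_nonneg_right (has i hi) (sub_nonneg.2 (ht1 i))
  have off_s : ∑ i ∈ sᶜ, w i * t i ≤ a * ∑ i ∈ sᶜ, t i := by
    rw [Finset.mul_sum]
    exact Finset.sum_le_sum fun i hi =>
      mul_le_mul_of_nonneg_right (hsa i (Finset.mem_compl.1 hi)) (ht0 i)
  have mass : ∑ i ∈ sᶜ, t i ≤ ∑ i ∈ s, (1 - t i) := by
    rw [← Finset.sum_add_sum_compl s] at hsum
    rw [Finset.sum_sub_distrib, Finset.sum_const, nsmul_one]
    linarith
  calc ∑ i ∈ sᶜ, w i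
      = ∑ i ∈ sᶜ, w i * t i + ∑ i ∈ sᶜ, w i * (1 - t i) := by
        rw [← Finset.sum_add_distrib]
        exact Finset.sum_congr rfl fun i _ => by ring
    _ ≤ ∑ i ∈ s, w i * (1 - t i) + ∑ i ∈ sᶜ, w i * (1 - t i) := by
        gcongr
        exact off_s.trans ((mul_le_mul_of_nonneg_left mass ha).trans on_s)
    _ = ∑ i, w i * (1 - t i) := Finset.sum_add_sum_compl s _

end Bathtub

section Projection

variable {𝕜 E ι : Type*} [RCLike 𝕜] [NormedAddCommGroup E] [InnerProductSpace 𝕜 E]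

lemma norm_sq_mul_one_sub_norm_sq_starProjection_le (K : Submodule 𝕜 E)
    [K.HasOrthogonalProjection] {x y : E} (hx : ‖x‖ = 1) (hy : y ∈ K) (c : 𝕜) :
    ‖c‖ ^ 2 * (1 - ‖K.starProjection x‖ ^ 2) ≤ ‖c • x - y‖ ^ 2 := by
  have pythagoras := K.norm_sq_eq_add_norm_sq_starProjection (c • x - y)
  have hres : Kᗮ.starProjection (c • x - y) = c • Kᗮ.starProjection x := by
    rw [map_sub, map_smul, Submodule.starProjection_orthogonal_apply_eq_zero hy, sub_zero]
  have hunit : 1 - ‖K.starProjection x‖ ^ 2 = ‖Kᗮ.starProjection x‖ ^ 2 := by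
    have := K.norm_sq_eq_add_norm_sq_starProjection x
    rw [hx] at this
    linarith
  rw [hres, norm_smul, mul_pow] at pythagoras
  rw [hunit, pythagoras]
  exact le_add_of_nonneg_left (sq_nonneg _)

variable [Fintype ι] {u : ι → E}

lemma sum_norm_sq_starProjection_le_finrank (hu : Orthonormal 𝕜 u) (K : Submodule 𝕜 E)
    [FiniteDimensional 𝕜 K] :
    ∑ i, ‖K.starProjection (u i)‖ ^ 2 ≤ Module.finrank 𝕜 K := by
  let e := stdOrthonormalBasis 𝕜 K
  have parseval (i : ι) : ‖K.starProjection (u i)‖ ^ 2 = ∑ k, ‖inner 𝕜 (u i) (e k : E)‖ ^ 2 := by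
    rw [Submodule.starProjection_apply, ← Submodule.coe_norm, ← e.sum_sq_norm_inner_right]
    simp only [Submodule.inner_orthogonalProjectionOnto_eq_of_mem_left, norm_inner_symm]
  calc ∑ i, ‖K.starProjection (u i)‖ ^ 2
      = ∑ k, ∑ i, ‖inner 𝕜 (u i) (e k : E)‖ ^ 2 := by
        simp only [parseval]
        exact Finset.sum_comm
    _ ≤ ∑ k, ‖(e k : E)‖ ^ 2 := Finset.sum_le_sum fun k _ => hu.sum_inner_products_le _
    _ = Module.finrank 𝕜 K := by simp [← Submodule.coe_norm]

lemma sum_compl_norm_sq_le_sum_norm_smul_sub_sq [DecidableEq ι] (hu : Orthonormal 𝕜 u)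
    {c : ι → 𝕜} {s : Finset ι} (hc : ∀ i ∈ s, ∀ j ∉ s, ‖c j‖ ≤ ‖c i‖) {K : Submodule 𝕜 E}
    [FiniteDimensional 𝕜 K] (hK : Module.finrank 𝕜 K ≤ s.card) {y : ι → E} (hy : ∀ i, y i ∈ K) :
    ∑ i ∈ sᶜ, ‖c i‖ ^ 2 ≤ ∑ i, ‖c i • u i - y i‖ ^ 2 := by
  have proj_le_one (i : ι) : ‖K.starProjection (u i)‖ ^ 2 ≤ 1 :=
    pow_le_one₀ (norm_nonneg _) ((K.norm_starProjection_apply_le _).trans_eq (hu.1 i))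
  calc ∑ i ∈ sᶜ, ‖c i‖ ^ 2
      ≤ ∑ i, ‖c i‖ ^ 2 * (1 - ‖K.starProjection (u i)‖ ^ 2) :=
        sum_compl_le_sum_mul_one_sub (fun i => sq_nonneg _)
          (fun i hi j hj => pow_le_pow_left₀ (norm_nonneg _) (hc i hi j hj) 2)
          (fun i => sq_nonneg _) proj_le_one
          ((sum_norm_sq_starProjection_le_finrank hu K).trans (mod_cast hK))
    _ ≤ ∑ i, ‖c i • u i - y i‖ ^ 2 := Finset.sum_le_sum fun i _ =>
        norm_sq_mul_one_sub_norm_sq_starProjection_le K (hu.1 i) (hy i) (c i)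

end Projection

section Frobenius

variable {m n k l ι : Type*} [Fintype m] [Fintype n] [Fintype k] [Fintype l]

lemma frobSq_nonneg (M : Matrix m n ℂ) : 0 ≤ frobSq M :=
  Finset.sum_nonneg fun _ _ => Finset.sum_nonneg fun _ _ => Complex.normSq_nonneg _

lemma ofReal_frobSq (M : Matrix m n ℂ) : (frobSq M : ℂ) = (Mᴴ * M).trace := by
  simp only [frobSq, Complex.ofReal_sum, Complex.normSq_eq_conj_mul_self, trace, diag_apply,
    mul_apply, conjTranspose_apply, starRingEnd_apply]
  exact Finset.sum_comm

lemma frobSq_ne_zero {M : Matrix m n ℂ} (hM : M ≠ 0) : frobSq M ≠ 0 := by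
  rwa [← Complex.ofReal_ne_zero, ofReal_frobSq, Ne, trace_conjTranspose_mul_self_eq_zero_iff]

lemma frobSq_add_of_trace_eq_zero {M N : Matrix m n ℂ} (h : (Mᴴ * N).trace = 0) :
    frobSq (M + N) = frobSq M + frobSq N := by
  have h' : (Nᴴ * M).trace = 0 := by
    rw [← star_eq_zero, ← trace_conjTranspose, conjTranspose_mul, conjTranspose_conjTranspose, h]
  rw [← Complex.ofReal_inj, Complex.ofReal_add]
  simp only [ofReal_frobSq, conjTranspose_add, Matrix.add_mul, Matrix.mul_add, trace_add, h, h',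
    add_zero, zero_add]

lemma frobSq_kronecker (A : Matrix m n ℂ) (B : Matrix k l ℂ) :
    frobSq (A ⊗ₖ B) = frobSq A * frobSq B := by
  rw [← Complex.ofReal_inj, Complex.ofReal_mul]
  simp only [ofReal_frobSq, conjTranspose_kronecker, ← mul_kronecker_mul, trace_kronecker]

lemma sum_norm_sq_mulVec_le_frobSq [Fintype ι] {v : ι → EuclideanSpace ℂ n}
    (hv : Orthonormal ℂ v) (M : Matrix m n ℂ) :
    ∑ i, ‖WithLp.toLp 2 (M *ᵥ (v i).ofLp)‖ ^ 2 ≤ frobSq M := by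
  have entry (i : ι) (a : m) : ‖(M *ᵥ (v i).ofLp) a‖ =
      ‖inner ℂ (v i) (WithLp.toLp 2 (star (M a)))‖ := by
    rw [norm_inner_symm, EuclideanSpace.inner_eq_star_dotProduct, star_star, dotProduct_comm]
    rfl
  calc ∑ i, ‖WithLp.toLp 2 (M *ᵥ (v i).ofLp)‖ ^ 2
      = ∑ a, ∑ i, ‖inner ℂ (v i) (WithLp.toLp 2 (star (M a)))‖ ^ 2 := by
        simp only [EuclideanSpace.norm_sq_eq, entry]
        exact Finset.sum_comm
    _ ≤ ∑ a, ‖WithLp.toLp 2 (star (M a))‖ ^ 2 :=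
        Finset.sum_le_sum fun a _ => hv.sum_inner_products_le _
    _ = frobSq M := by
        simp only [EuclideanSpace.norm_sq_eq, Pi.star_apply, norm_star, frobSq,
          Complex.normSq_eq_norm_sq]

end Frobenius

section DyadSum

variable {m n ι : Type*}

/-- The sum of weighted dyads `∑ i ∈ s, cᵢ uᵢ vᵢᴴ`. With `u` and `v` orthonormal this is a spectral
decomposition (`u = v`, real `c`) or a singular value decomposition, truncated to the indices in
`s`. -/
noncomputable def dyadSum (s : Finset ι) (c : ι → ℂ) (u : ι → EuclideanSpace ℂ m)
    (v : ι → EuclideanSpace ℂ n) : Matrix m n ℂ :=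
  ∑ i ∈ s, c i • vecMulVec (u i).ofLp (star (v i).ofLp)

lemma dyadSum_univ_sub_dyadSum [Fintype ι] [DecidableEq ι] (s : Finset ι) (c : ι → ℂ)
    (u : ι → EuclideanSpace ℂ m) (v : ι → EuclideanSpace ℂ n) :
    dyadSum Finset.univ c u v - dyadSum s c u v = dyadSum sᶜ c u v :=
  sub_eq_of_eq_add' (Finset.sum_add_sum_compl s _).symm

lemma conjTranspose_dyadSum (s : Finset ι) (c : ι → ℂ) (u : ι → EuclideanSpace ℂ m)
    (v : ι → EuclideanSpace ℂ n) : (dyadSum s c u v)ᴴ = dyadSum s (star c) v u := by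
  simp only [dyadSum, conjTranspose_sum, conjTranspose_smul, conjTranspose_vecMulVec, star_star,
    Pi.star_apply]

variable [Fintype n]

lemma orthonormal_toLp_iff [DecidableEq ι] {v : ι → n → ℂ} :
    Orthonormal ℂ (fun i => (WithLp.toLp 2 (v i) : EuclideanSpace ℂ n)) ↔
      ∀ i j, star (v i) ⬝ᵥ v j = if i = j then 1 else 0 := by
  simp only [orthonormal_iff_ite, EuclideanSpace.inner_eq_star_dotProduct, dotProduct_comm]

lemma dyadSum_mulVec {s : Finset ι} {c : ι → ℂ} {u : ι → EuclideanSpace ℂ m}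
    {v : ι → EuclideanSpace ℂ n} (hv : Orthonormal ℂ v) {j : ι} (hj : j ∈ s) :
    dyadSum s c u v *ᵥ (v j).ofLp = c j • (u j).ofLp := by
  classical
  have hdot := orthonormal_toLp_iff.1 hv
  simp only [dyadSum, sum_mulVec, smul_mulVec, vecMulVec_mulVec, hdot]
  rw [Finset.sum_eq_single_of_mem j hj fun i _ hij => by simp [hij]]
  simp

variable [Fintype m]

lemma frobSq_dyadSum {s : Finset ι} {c : ι → ℂ} {u : ι → EuclideanSpace ℂ m}
    {v : ι → EuclideanSpace ℂ n} (hu : Orthonormal ℂ u) (hv : Orthonormal ℂ v) :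
    frobSq (dyadSum s c u v) = ∑ i ∈ s, ‖c i‖ ^ 2 := by
  classical
  have hdot := orthonormal_toLp_iff.1 hv
  have term {i : ι} (hi : i ∈ s) : ((dyadSum s c u v)ᴴ *
      (c i • vecMulVec (u i).ofLp (star (v i).ofLp))).trace = (‖c i‖ : ℂ) ^ 2 := by
    rw [conjTranspose_dyadSum, Matrix.mul_smul, mul_vecMulVec, dyadSum_mulVec hu hi, trace_smul,
      trace_vecMulVec, smul_dotProduct, dotProduct_comm, hdot, if_pos rfl, smul_eq_mul,
      smul_eq_mul, mul_one]
    exact Complex.mul_conj' (c i)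
  rw [← Complex.ofReal_inj, ofReal_frobSq, Complex.ofReal_sum]
  nth_rw 2 [dyadSum]
  rw [Matrix.mul_sum, trace_sum]
  exact Finset.sum_congr rfl fun i hi => by rw [term hi, Complex.ofReal_pow]

theorem frobSq_dyadSum_sub_le_of_rank_le [Fintype ι] {s : Finset ι} {c : ι → ℂ}
    {u : ι → EuclideanSpace ℂ m} {v : ι → EuclideanSpace ℂ n} (hu : Orthonormal ℂ u)
    (hv : Orthonormal ℂ v) (hc : ∀ i ∈ s, ∀ j ∉ s, ‖c j‖ ≤ ‖c i‖) {A : Matrix m n ℂ}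
    (hA : A.rank ≤ s.card) :
    frobSq (dyadSum Finset.univ c u v - dyadSum s c u v) ≤
      frobSq (dyadSum Finset.univ c u v - A) := by
  classical
  have hrange : Module.finrank ℂ (LinearMap.range A.toEuclideanLin) ≤ s.card := by
    rwa [toEuclideanLin, toLpLin_eq_toLin, ← rank_eq_finrank_range_toLin]
  have residual (i : ι) : WithLp.toLp 2 ((dyadSum Finset.univ c u v - A) *ᵥ (v i).ofLp) =
      c i • u i - A.toEuclideanLin (v i) := by
    rw [sub_mulVec, dyadSum_mulVec hv (Finset.mem_univ i)]
    rfl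
  calc frobSq (dyadSum Finset.univ c u v - dyadSum s c u v)
      = ∑ i ∈ sᶜ, ‖c i‖ ^ 2 := by rw [dyadSum_univ_sub_dyadSum, frobSq_dyadSum hu hv]
    _ ≤ ∑ i, ‖c i • u i - A.toEuclideanLin (v i)‖ ^ 2 :=
        sum_compl_norm_sq_le_sum_norm_smul_sub_sq hu hc hrange fun i => ⟨v i, rfl⟩
    _ ≤ frobSq (dyadSum Finset.univ c u v - A) := by
        simpa only [residual] using
          sum_norm_sq_mulVec_le_frobSq hv (dyadSum Finset.univ c u v - A)

end DyadSum

section KroneckerCoeff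

variable {m n k l ι : Type*} [Fintype m] [Fintype n] [Fintype k] [Fintype l]

/-- The matrix `R_A` of the theorem for an arbitrary block matrix `S`: its `(i, j)` entry is the
coefficient of the orthogonal projection of the `(i, j)` block of `S` to the line spanned by `B`.
It is `0` when `B = 0`. -/
noncomputable def kroneckerCoeff (B : Matrix k l ℂ) (S : Matrix (m × k) (n × l) ℂ) :
    Matrix m n ℂ :=
  of fun i j => (Bᴴ * S.submatrix (Prod.mk i) (Prod.mk j)).trace / (frobSq B : ℂ)

lemma trace_conjTranspose_kronecker_mul (C : Matrix m n ℂ) (B : Matrix k l ℂ)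
    (S : Matrix (m × k) (n × l) ℂ) :
    ((C ⊗ₖ B)ᴴ * S).trace =
      ∑ i, ∑ j, star (C i j) * (Bᴴ * S.submatrix (Prod.mk i) (Prod.mk j)).trace := by
  simp only [trace, diag_apply, mul_apply, conjTranspose_apply, kronecker_apply, submatrix_apply,
    star_mul', Fintype.sum_prod_type, Finset.mul_sum, mul_assoc]
  rw [Finset.sum_comm (s := (Finset.univ : Finset m))]
  exact Finset.sum_congr rfl fun j _ => Finset.sum_comm

lemma trace_conjTranspose_kronecker_mul_sub_kroneckerCoeff {B : Matrix k l ℂ} (hB : B ≠ 0)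
    (C : Matrix m n ℂ) (S : Matrix (m × k) (n × l) ℂ) :
    ((C ⊗ₖ B)ᴴ * (S - kroneckerCoeff B S ⊗ₖ B)).trace = 0 := by
  have hB' : (frobSq B : ℂ) ≠ 0 := Complex.ofReal_ne_zero.2 (frobSq_ne_zero hB)
  have block_trace (i : m) (j : n) :
      (Bᴴ * (kroneckerCoeff B S ⊗ₖ B).submatrix (Prod.mk i) (Prod.mk j)).trace =
        (Bᴴ * S.submatrix (Prod.mk i) (Prod.mk j)).trace := by
    have block : (kroneckerCoeff B S ⊗ₖ B).submatrix (Prod.mk i) (Prod.mk j) =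
        kroneckerCoeff B S i j • B := rfl
    rw [block, Matrix.mul_smul, trace_smul, ← ofReal_frobSq, smul_eq_mul]
    exact div_mul_cancel₀ _ hB'
  rw [Matrix.mul_sub, trace_sub, sub_eq_zero]
  simp only [trace_conjTranspose_kronecker_mul, block_trace]

lemma frobSq_sub_kronecker {B : Matrix k l ℂ} (hB : B ≠ 0) (S : Matrix (m × k) (n × l) ℂ)
    (A : Matrix m n ℂ) :
    frobSq (S - A ⊗ₖ B) =
      frobSq (kroneckerCoeff B S - A) * frobSq B + frobSq (S - kroneckerCoeff B S ⊗ₖ B) := by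
  have split : S - A ⊗ₖ B =
      (kroneckerCoeff B S - A) ⊗ₖ B + (S - kroneckerCoeff B S ⊗ₖ B) := by
    ext
    simp [sub_mul]
  rw [split, frobSq_add_of_trace_eq_zero
    (trace_conjTranspose_kronecker_mul_sub_kroneckerCoeff hB _ S), frobSq_kronecker]

theorem eig_truncation_RA_minimizes_general [Fintype ι] (S : Matrix (m × k) (n × l) ℂ)
    {B : Matrix k l ℂ} (hB : B ≠ 0) {s : Finset ι} {c : ι → ℂ} {u : ι → EuclideanSpace ℂ m}
    {v : ι → EuclideanSpace ℂ n} (hu : Orthonormal ℂ u) (hv : Orthonormal ℂ v)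
    (hc : ∀ i ∈ s, ∀ j ∉ s, ‖c j‖ ≤ ‖c i‖)
    (hdec : kroneckerCoeff B S = dyadSum Finset.univ c u v) {A : Matrix m n ℂ}
    (hA : A.rank ≤ s.card) :
    √(frobSq (S - dyadSum s c u v ⊗ₖ B)) ≤ √(frobSq (S - A ⊗ₖ B)) := by
  rw [frobSq_sub_kronecker hB, frobSq_sub_kronecker hB S A, hdec]
  gcongr
  · exact frobSq_nonneg B
  · exact frobSq_dyadSum_sub_le_of_rank_le hu hv hc hA

end KroneckerCoeff

/-- A-step optimality of LR-Kron: for S, B Hermitian PSD with B ≠ 0, the rank-r_a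
eigentruncation Â = EIG_{r_a}(R_A) of R_A with (R_A)ᵢⱼ = tr(Bᴴ S(i,j))/‖B‖_F² minimizes
‖S − A⊗B‖_F over all A of rank at most r_a. -/
theorem eig_truncation_RA_minimizes {p q : ℕ}
    (S : Matrix (Fin p × Fin q) (Fin p × Fin q) ℂ) (hS : S.PosSemidef)
    (B : Matrix (Fin q) (Fin q) ℂ) (hB : B.PosSemidef) (hB0 : B ≠ 0)
    (ra : ℕ) (hra1 : 1 ≤ ra) (hrap : ra ≤ p)
    (RA : Matrix (Fin p) (Fin p) ℂ)
    (hRA : RA = Matrix.of fun i j => (Bᴴ * blk S i j).trace / (frobSq B : ℂ))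
    (hRApsd : RA.PosSemidef)
    (lam : Fin p → ℝ) (u : Fin p → Fin p → ℂ)
    (hanti : Antitone lam) (hnonneg : ∀ i, 0 ≤ lam i)
    (horth : ∀ i j, star (u i) ⬝ᵥ u j = if i = j then 1 else 0)
    (hdec : RA = ∑ i, (lam i : ℂ) • Matrix.vecMulVec (u i) (star (u i)))
    (Ahat : Matrix (Fin p) (Fin p) ℂ)
    (hAhat : Ahat = ∑ i ∈ Finset.univ.filter (fun i : Fin p => (i : ℕ) < ra),
      (lam i : ℂ) • Matrix.vecMulVec (u i) (star (u i))) :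
    ∀ A : Matrix (Fin p) (Fin p) ℂ, A.rank ≤ ra →
      Real.sqrt (frobSq (S - Ahat ⊗ₖ B)) ≤ Real.sqrt (frobSq (S - A ⊗ₖ B)) := by
  subst hAhat
  intro A hA
  have hu := orthonormal_toLp_iff.2 horth
  refine eig_truncation_RA_minimizes_general S hB0 hu hu (fun i hi j hj => ?_)
    (hRA.symm.trans hdec) (by rwa [Fin.card_filter_val_lt, min_eq_right hrap])
  have hij : i ≤ j := by grind
  simpa [abs_of_nonneg, hnonneg] using hanti hij
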